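/- arXiv:1910.02946 — 2 statements merged into one kernel-verified Lean document; each statement's English description precedes it below -/
import Mathlib

section
/- Fix real numbers a < b. Suppose (T_α)_{α>0} is a family of bounded linear operators on L¹[a,b] such that: (1) T_1 is the integration operator, (T_1 f)(t) = ∫_a^t f(s) ds; (2) T_α ∘ T_β = T_{α+β} for all α, β > 0; (3) the map α ↦ T_α from (0,∞) to the Banach space of bounded linear endomorphisms of L¹[a,b] (with the operator norm) is continuous. Then for every α > 0 and every f ∈ L¹[a,b], T_α f equals the Riemann–Liouville fractional integral I_{a^+}^α f, i.e. (T_α f)(t) = (1/Γ(α)) ∫_a^t (t−s)^{α−1} f(s) ds for almost every t ∈ [a,b]. -/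
open MeasureTheory Set Filter Topology

/-!
Write `V` for integration from `a` and `φ x g = ∫ e^{-x(t-a)} g(t) dt` over `[a, b]`. Up to errors
which decay like `e^{-x(b-a)}`, the functional `φ x` is a left eigenvector of the fractional
integral of order `α`, with eigenvalue `x^{-α}`. It is also an approximate left eigenvector of every
operator `A` commuting with `V`: modulo the range of `1 - xV`, on which `φ x` almost vanishes, each
`g` is a multiple of the constant function `1`. The eigenvalue, as a function of `x`, is called the
symbol of `A`; symbols are multiplicative. Hence the symbol of `T α` at dyadic `α` is obtained from
`x^{-1}` by taking square roots, where the sign is fixed because `T α` is itself a square.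
A function on `[a, b]` whose truncated Laplace transform decays like `e^{-x(b-a)}` vanishes, so an
operator with symbol `x^{-α}` is the fractional integral of order `α`. The error bound
is uniform in `α`, which extends the conclusion from dyadic `α` to all `α` by continuity.
-/

section ExponentialSmallness

variable {E F : Type*} [NormedAddCommGroup E] [NormedAddCommGroup F] {L : ℝ}

/-- Decay of exponential type `L` at `+∞`: `u x = O(e^{-cx})` for every `c < L`. The rate `L` itself
is excluded, so that the notion is stable under multiplication by powers of `x`. -/
def IsExpSmall (L : ℝ) (u : ℝ → E) : Prop :=
  ∀ c < L, u =O[atTop] fun x => Real.exp (-(c * x))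

lemma isExpSmall_exp_neg_mul (L : ℝ) : IsExpSmall L fun x => Real.exp (-(L * x)) := by
  intro c hc
  refine Asymptotics.IsBigO.of_norm_eventuallyLE ?_
  filter_upwards [eventually_ge_atTop 0] with x hx
  rw [Real.norm_eq_abs, Real.abs_exp]
  gcongr

lemma IsExpSmall.add {u v : ℝ → E} (hu : IsExpSmall L u) (hv : IsExpSmall L v) :
    IsExpSmall L fun x => u x + v x :=
  fun c hc => (hu c hc).add (hv c hc)

lemma IsExpSmall.of_isBigO {u : ℝ → E} {v : ℝ → F} (hu : IsExpSmall L u) (hv : v =O[atTop] u) :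
    IsExpSmall L v :=
  fun c hc => hv.trans (hu c hc)

lemma isExpSmall_of_norm_le {u : ℝ → E} {C : ℝ}
    (hu : ∀ x, 1 ≤ x → ‖u x‖ ≤ Real.exp (-((x - 1) * L)) * C) : IsExpSmall L u := by
  refine (isExpSmall_exp_neg_mul L).of_isBigO (Asymptotics.IsBigO.of_bound (Real.exp L * C) ?_)
  filter_upwards [eventually_ge_atTop 1] with x hx
  refine (hu x hx).trans_eq ?_
  rw [Real.norm_eq_abs, Real.abs_exp, mul_right_comm, ← Real.exp_add]
  ring_nf

lemma IsExpSmall.congr_left {u v : ℝ → E} (hu : IsExpSmall L u) (huv : ∀ x, u x = v x) :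
    IsExpSmall L v :=
  funext huv ▸ hu

lemma IsExpSmall.smul_of_isBigO_rpow [NormedSpace ℝ E] {m : ℝ → ℝ} {u : ℝ → E} {N : ℝ}
    (hu : IsExpSmall L u) (hm : m =O[atTop] fun x => x ^ N) : IsExpSmall L fun x => m x • u x := by
  intro c hc
  have hpow : (fun x : ℝ => x ^ N) =O[atTop] fun x => Real.exp ((L - c) / 2 * x) :=
    (isLittleO_rpow_exp_pos_mul_atTop N (by linarith)).isBigO
  refine ((hm.trans hpow).smul (hu ((c + L) / 2) (by linarith))).congr_right fun x => ?_
  rw [smul_eq_mul, ← Real.exp_add]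
  ring_nf

/-- The square `n x * n x` only serves to select the positive square root. -/
lemma IsExpSmall.sub_rpow_of_mul_self {m n : ℝ → ℝ} {α : ℝ} (hL : 0 < L)
    (hm : IsExpSmall L fun x => m x * m x - x ^ (-(2 * α)))
    (hn : IsExpSmall L fun x => n x * n x - m x) : IsExpSmall L fun x => m x - x ^ (-α) := by
  have hdecay : (fun x => n x * n x - m x) =o[atTop] fun x : ℝ => x ^ (-α) := by
    refine (hn (L / 2) (by linarith)).trans_isLittleO ?_
    simpa only [neg_mul] using isLittleO_exp_neg_mul_rpow_atTop (half_pos hL) (-α)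
  refine (hm.smul_of_isBigO_rpow (m := fun x => 2 * x ^ α)
    ((Asymptotics.isBigO_refl _ _).const_mul_left 2)).of_isBigO
      (Asymptotics.IsBigO.of_bound' ?_)
  filter_upwards [hdecay.bound one_half_pos, eventually_gt_atTop 0] with x hx hx0
  have hp : 0 < x ^ (-α) := Real.rpow_pos_of_pos hx0 _
  have hinv : x ^ α * x ^ (-α) = 1 := by rw [← Real.rpow_add hx0, add_neg_cancel, Real.rpow_zero]
  have hsq : x ^ (-(2 * α)) = x ^ (-α) * x ^ (-α) := by rw [← Real.rpow_add hx0]; ring_nf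
  rw [Real.norm_eq_abs, Real.norm_of_nonneg hp.le] at hx
  have hsum : x ^ (-α) / 2 ≤ m x + x ^ (-α) := by
    linarith [(abs_le.1 hx).2, mul_self_nonneg (n x)]
  have hfactor : 1 ≤ 2 * x ^ α * (m x + x ^ (-α)) := by
    nlinarith [Real.rpow_pos_of_pos hx0 α]
  calc ‖m x - x ^ (-α)‖ ≤ (2 * x ^ α * (m x + x ^ (-α))) * ‖m x - x ^ (-α)‖ :=
        le_mul_of_one_le_left (norm_nonneg _) hfactor
    _ = ‖(2 * x ^ α * (m x + x ^ (-α))) * (m x - x ^ (-α))‖ := by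
        rw [norm_mul, Real.norm_of_nonneg (zero_le_one.trans hfactor)]
    _ = ‖(2 * x ^ α) • (m x * m x - x ^ (-(2 * α)))‖ := by rw [hsq, smul_eq_mul]; ring_nf

end ExponentialSmallness

section Symbol

variable {E : Type*} [NormedAddCommGroup E] [NormedSpace ℝ E] {φ : ℝ → StrongDual ℝ E} {L N : ℝ}
  {A B V : E →L[ℝ] E} {m n : ℝ → ℝ}

/-- `A` has symbol `m` with respect to the family of functionals `φ` if `φ x ∘ A = m x • φ x` up to
an error of exponential type `L`: each `φ x` is almost a left eigenvector of `A`. -/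
def HasSymbol (φ : ℝ → StrongDual ℝ E) (L : ℝ) (A : E →L[ℝ] E) (m : ℝ → ℝ) : Prop :=
  IsExpSmall L fun x => (φ x).comp A - m x • φ x

lemma HasSymbol.comp (hA : HasSymbol φ L A m) (hB : HasSymbol φ L B n)
    (hm : m =O[atTop] fun x => x ^ N) : HasSymbol φ L (A.comp B) fun x => m x * n x := by
  have hAB : IsExpSmall L fun x => ((φ x).comp A - m x • φ x).comp B :=
    hA.of_isBigO (Asymptotics.IsBigO.of_bound ‖B‖ (Eventually.of_forall fun x =>
      ((ContinuousLinearMap.opNorm_comp_le _ _).trans_eq (mul_comm _ _))))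
  refine (hAB.add (hB.smul_of_isBigO_rpow hm)).congr_left fun x => ?_
  ext g
  simp only [sub_apply, ContinuousLinearMap.comp_apply,
    smul_apply, add_apply, smul_eq_mul]
  ring

lemma HasSymbol.congr_isExpSmall (hA : HasSymbol φ L A m)
    (hφ : φ =O[atTop] fun _ => (1 : ℝ)) (hmn : IsExpSmall L fun x => m x - n x) :
    HasSymbol φ L A n := by
  have hdiff : IsExpSmall L fun x => (m x - n x) • φ x :=
    hmn.of_isBigO (by simpa using (Asymptotics.isBigO_refl (fun x => m x - n x) _).smul hφ)
  exact (hA.add hdiff).congr_left fun x => by module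

lemma HasSymbol.isExpSmall_sub (hm : HasSymbol φ L A m) (hn : HasSymbol φ L A n)
    (hφ : (fun x : ℝ => x ^ (-N)) =O[atTop] φ) : IsExpSmall L fun x => m x - n x := by
  have hdiff : IsExpSmall L fun x => (m x - n x) • φ x := by
    refine (hn.add (hm.of_isBigO (Asymptotics.isBigO_refl _ _).neg_left)).of_isBigO ?_
    refine Asymptotics.isBigO_of_le _ fun x => le_of_eq (congrArg norm ?_)
    module
  refine (hdiff.smul_of_isBigO_rpow (Asymptotics.isBigO_refl (fun x : ℝ => x ^ N) _)).of_isBigO ?_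
  refine Asymptotics.IsBigO.trans (Asymptotics.IsBigO.of_bound' ?_)
    ((Asymptotics.isBigO_refl (fun x : ℝ => x ^ N) _).smul
      ((Asymptotics.isBigO_refl (fun x => m x - n x) _).smul hφ))
  filter_upwards [eventually_gt_atTop 0] with x hx
  rw [smul_eq_mul, smul_eq_mul, mul_left_comm, ← Real.rpow_add hx, add_neg_cancel, Real.rpow_zero,
    mul_one]

/-- Modulo the range of `1 - x V`, which `φ x` almost annihilates, every `g` is a multiple of `e`;
hence `φ x ∘ A` is determined by its value at `e`. -/
lemma HasSymbol.of_commute {e : E} (hV : HasSymbol φ L V fun x => x ^ (-1 : ℝ))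
    (hAV : A.comp V = V.comp A)
    (hres : ∀ᶠ x in atTop, ∀ g, ∃ r, r - x • V r = g - (x * φ x g) • e ∧ ‖r‖ ≤ x ^ N * ‖g‖) :
    HasSymbol φ L A fun x => x * φ x (A e) := by
  have hann : IsExpSmall L fun x => (-(x ^ N * x * ‖A‖)) • ((φ x).comp V - x ^ (-1 : ℝ) • φ x) := by
    refine hV.smul_of_isBigO_rpow (N := N + 1) (Asymptotics.IsBigO.of_bound ‖A‖ ?_)
    filter_upwards [eventually_gt_atTop 0] with x hx
    rw [norm_neg, norm_mul, norm_norm, mul_comm, Real.rpow_add_one hx.ne']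
  refine hann.of_isBigO (Asymptotics.IsBigO.of_bound' ?_)
  filter_upwards [hres, eventually_gt_atTop 0] with x hres hx
  refine ContinuousLinearMap.opNorm_le_bound _ (norm_nonneg _) fun g => ?_
  obtain ⟨r, hr, hrg⟩ := hres g
  have hAr : A g - (x * φ x g) • A e = A r - x • V (A r) := by
    rw [← ContinuousLinearMap.comp_apply V A, ← hAV, ContinuousLinearMap.comp_apply, ← map_smul,
      ← map_smul, ← map_sub, ← map_sub, hr]
  have hφA : ((φ x).comp A - (x * φ x (A e)) • φ x) g
      = -(x * ((φ x).comp V - x ^ (-1 : ℝ) • φ x) (A r)) := by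
    have h := congrArg (φ x) hAr
    simp only [map_sub, map_smul, smul_eq_mul] at h
    simp only [sub_apply, ContinuousLinearMap.comp_apply,
      smul_apply, smul_eq_mul, Real.rpow_neg_one]
    field_simp
    linarith
  rw [hφA, norm_neg, norm_mul, norm_smul, norm_neg, norm_mul, norm_mul, norm_norm,
    Real.norm_of_nonneg (Real.rpow_nonneg hx.le N)]
  calc ‖x‖ * ‖((φ x).comp V - x ^ (-1 : ℝ) • φ x) (A r)‖
      ≤ ‖x‖ * (‖(φ x).comp V - x ^ (-1 : ℝ) • φ x‖ * (‖A‖ * (x ^ N * ‖g‖))) := by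
        gcongr
        exact ContinuousLinearMap.le_opNorm_of_le _ (A.le_opNorm_of_le hrg)
    _ = _ := by ring

end Symbol

section SymbolOfSemigroup

variable {E : Type*} [NormedAddCommGroup E] [NormedSpace ℝ E] {φ : ℝ → StrongDual ℝ E} {L N M : ℝ}
  {T : ℝ → E →L[ℝ] E}

lemma hasSymbol_rpow_half (hL : 0 < L) (hφ : φ =O[atTop] fun _ => (1 : ℝ))
    (hφ' : (fun x : ℝ => x ^ (-N)) =O[atTop] φ)
    (h_index : ∀ α β : ℝ, 0 < α → 0 < β → (T α).comp (T β) = T (α + β))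
    (hsymbol : ∀ α, 0 < α → ∃ m, m =O[atTop] (fun x : ℝ => x ^ M) ∧ HasSymbol φ L (T α) m)
    {α : ℝ} (hα : 0 < α) (h2α : HasSymbol φ L (T (2 * α)) fun x => x ^ (-(2 * α))) :
    HasSymbol φ L (T α) fun x => x ^ (-α) := by
  obtain ⟨m, hm, hTm⟩ := hsymbol α hα
  obtain ⟨n, hn, hTn⟩ := hsymbol (α / 2) (half_pos hα)
  have hmm : HasSymbol φ L (T (2 * α)) fun x => m x * m x := by
    rw [two_mul, ← h_index α α hα hα]
    exact hTm.comp hTm hm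
  have hnn : HasSymbol φ L (T α) fun x => n x * n x := by
    rw [← add_halves α, ← h_index _ _ (half_pos hα) (half_pos hα)]
    exact hTn.comp hTn hn
  exact hTm.congr_isExpSmall hφ
    ((hmm.isExpSmall_sub h2α hφ').sub_rpow_of_mul_self hL (hnn.isExpSmall_sub hTm hφ'))

lemma hasSymbol_rpow_natCast_mul
    (h_index : ∀ α β : ℝ, 0 < α → 0 < β → (T α).comp (T β) = T (α + β))
    {α : ℝ} (hα : 0 < α) (hTα : HasSymbol φ L (T α) fun x => x ^ (-α)) {k : ℕ} (hk : 1 ≤ k) :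
    HasSymbol φ L (T (k * α)) fun x => x ^ (-(k * α)) := by
  induction k, hk using Nat.le_induction with
  | base => simpa using hTα
  | succ k hk ih =>
    have hkα : 0 < k * α := by positivity
    rw [Nat.cast_succ, add_one_mul, ← h_index _ _ hkα hα]
    refine (ih.comp hTα (Asymptotics.isBigO_refl _ _)).of_isBigO (EventuallyEq.isBigO ?_)
    filter_upwards [eventually_gt_atTop 0] with x hx
    rw [neg_add, Real.rpow_add hx]

lemma hasSymbol_rpow_dyadic (hL : 0 < L) (hφ : φ =O[atTop] fun _ => (1 : ℝ))
    (hφ' : (fun x : ℝ => x ^ (-N)) =O[atTop] φ)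
    (h_index : ∀ α β : ℝ, 0 < α → 0 < β → (T α).comp (T β) = T (α + β))
    (hsymbol : ∀ α, 0 < α → ∃ m, m =O[atTop] (fun x : ℝ => x ^ M) ∧ HasSymbol φ L (T α) m)
    (hone : HasSymbol φ L (T 1) fun x => x ^ (-1 : ℝ)) {k : ℕ} (hk : 1 ≤ k) (n : ℕ) :
    HasSymbol φ L (T (k / 2 ^ n)) fun x => x ^ (-(k / 2 ^ n : ℝ)) := by
  have hpow : HasSymbol φ L (T (2 ^ n)⁻¹) fun x => x ^ (-((2 ^ n)⁻¹ : ℝ)) := by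
    induction n with
    | zero => simpa using hone
    | succ n ih =>
      have hdouble : 2 * ((2 ^ (n + 1))⁻¹ : ℝ) = (2 ^ n)⁻¹ := by rw [pow_succ]; field_simp
      exact hasSymbol_rpow_half hL hφ hφ' h_index hsymbol (by positivity) (by rwa [hdouble])
  exact hasSymbol_rpow_natCast_mul h_index (by positivity) hpow hk

end SymbolOfSemigroup

section RiemannLiouville

/-- The Riemann–Liouville fractional integral of order `α` with base point `a`. -/
noncomputable def riemannLiouville (a α : ℝ) (f : ℝ → ℝ) (t : ℝ) : ℝ :=
  (1 / Real.Gamma α) * ∫ s in a..t, (t - s) ^ (α - 1) * f s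

/-- The Laplace transform of `g`, with origin moved to `a` and cut off at `b`. -/
noncomputable def truncatedLaplace (a b x : ℝ) (g : ℝ → ℝ) : ℝ :=
  ∫ t in Icc a b, Real.exp (-(x * (t - a))) * g t

variable {a b α x t : ℝ} {f g : ℝ → ℝ}

lemma riemannLiouville_one (a : ℝ) (f : ℝ → ℝ) (t : ℝ) :
    riemannLiouville a 1 f t = ∫ s in a..t, f s := by
  simp [riemannLiouville]

lemma riemannLiouville_congr (ht : a ≤ t) (hfg : EqOn f g (Icc a t)) :
    riemannLiouville a α f t = riemannLiouville a α g t := by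
  rw [riemannLiouville, riemannLiouville, intervalIntegral.integral_congr]
  intro s hs
  rw [uIcc_of_le ht] at hs
  simp only [hfg hs]

lemma abs_riemannLiouville_le (hα : 0 < α) (ht : a ≤ t) :
    |riemannLiouville a α f t| ≤ riemannLiouville a α (fun s => |f s|) t := by
  rw [riemannLiouville, abs_mul, abs_of_nonneg (one_div_nonneg.2 (Real.Gamma_pos_of_pos hα).le)]
  refine mul_le_mul_of_nonneg_left ?_ (one_div_nonneg.2 (Real.Gamma_pos_of_pos hα).le)
  refine (intervalIntegral.abs_integral_le_integral_abs ht).trans_eq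
    (intervalIntegral.integral_congr fun s hs => ?_)
  rw [uIcc_of_le ht] at hs
  simp only [abs_mul, abs_of_nonneg (Real.rpow_nonneg (sub_nonneg.2 hs.2) _)]

lemma exp_neg_mul_riemannLiouville_add_left (a α x t : ℝ) (f : ℝ → ℝ) :
    Real.exp (-(x * t)) * riemannLiouville a α f (a + t) = (1 / Real.Gamma α) *
      ∫ s in (0)..t, Real.exp (-(x * s)) * f (a + s) *
        ((t - s) ^ (α - 1) * Real.exp (-(x * (t - s)))) := by
  have hshift := intervalIntegral.integral_comp_add_left (a := 0) (b := t)
    (fun s => (a + t - s) ^ (α - 1) * f s) a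
  rw [add_zero] at hshift
  rw [riemannLiouville, ← hshift, mul_left_comm, ← intervalIntegral.integral_const_mul]
  congr 1
  refine intervalIntegral.integral_congr fun s _ => ?_
  have hexp : Real.exp (-(x * t)) = Real.exp (-(x * s)) * Real.exp (-(x * (t - s))) := by
    rw [← Real.exp_add]; ring_nf
  simp only [hexp, add_sub_add_left_eq_sub]
  ring

lemma integrableOn_Ioi_comp_add_left (a : ℝ) :
    IntegrableOn (fun t => f (a + t)) (Ioi 0) ↔ IntegrableOn f (Ioi a) := by
  simpa [Function.comp_def, preimage_const_add_Ioi] using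
    (measurePreserving_add_left volume a).integrableOn_comp_preimage
      (measurableEmbedding_addLeft a) (f := f) (s := Ioi a)

lemma integral_Ioi_comp_add_left (f : ℝ → ℝ) (a : ℝ) :
    ∫ t in Ioi 0, f (a + t) = ∫ t in Ioi a, f t := by
  simpa [preimage_const_add_Ioi] using
    (measurePreserving_add_left volume a).setIntegral_preimage_emb
      (measurableEmbedding_addLeft a) f (Ioi a)

lemma integrableOn_rpow_mul_exp_neg_mul_Ioi (hα : 0 < α) (hx : 0 < x) :
    IntegrableOn (fun t : ℝ => t ^ (α - 1) * Real.exp (-(x * t))) (Ioi 0) := by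
  simpa using integrableOn_rpow_mul_exp_neg_mul_rpow (show -1 < α - 1 by linarith) one_pos hx

lemma integrableOn_exp_mul_riemannLiouville (hα : 0 < α) (hx : 0 < x)
    (hf : IntegrableOn (fun t => Real.exp (-(x * (t - a))) * f t) (Ioi a)) :
    IntegrableOn (fun t => Real.exp (-(x * (t - a))) * riemannLiouville a α f t) (Ioi a) := by
  rw [← integrableOn_Ioi_comp_add_left] at hf ⊢
  simp only [add_sub_cancel_left, exp_neg_mul_riemannLiouville_add_left] at hf ⊢
  refine Integrable.const_mul ?_ _
  exact (integrable_indicator_iff measurableSet_Ioi).1 (integrable_posConvolution hf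
    (integrableOn_rpow_mul_exp_neg_mul_Ioi hα hx) (ContinuousLinearMap.mul ℝ ℝ))

lemma integral_exp_mul_riemannLiouville (hα : 0 < α) (hx : 0 < x)
    (hf : IntegrableOn (fun t => Real.exp (-(x * (t - a))) * f t) (Ioi a)) :
    ∫ t in Ioi a, Real.exp (-(x * (t - a))) * riemannLiouville a α f t =
      x ^ (-α) * ∫ t in Ioi a, Real.exp (-(x * (t - a))) * f t := by
  rw [← integrableOn_Ioi_comp_add_left] at hf
  rw [← integral_Ioi_comp_add_left _ a, ← integral_Ioi_comp_add_left _ a]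
  simp only [add_sub_cancel_left, exp_neg_mul_riemannLiouville_add_left] at hf ⊢
  have hconv := integral_posConvolution hf (integrableOn_rpow_mul_exp_neg_mul_Ioi hα hx)
    (ContinuousLinearMap.mul ℝ ℝ)
  simp only [ContinuousLinearMap.mul_apply', Real.integral_rpow_mul_exp_neg_mul_Ioi hα hx,
    one_div, Real.inv_rpow hx.le, ← Real.rpow_neg hx.le] at hconv
  rw [integral_const_mul, hconv]
  field_simp [(Real.Gamma_pos_of_pos hα).ne']

lemma integrableOn_exp_neg_mul_mul_Ioi (hx : 0 ≤ x) (hf : IntegrableOn f (Ioi a)) :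
    IntegrableOn (fun t => Real.exp (-(x * (t - a))) * f t) (Ioi a) := by
  refine Integrable.mono' hf.norm ((Continuous.aestronglyMeasurable (by fun_prop)).mul hf.1)
    ((ae_restrict_iff' measurableSet_Ioi).2 (Eventually.of_forall fun t ht => ?_))
  rw [norm_mul, Real.norm_eq_abs, Real.abs_exp]
  refine mul_le_of_le_one_left (norm_nonneg _) (Real.exp_le_one_iff.2 ?_)
  exact neg_nonpos.2 (mul_nonneg hx (sub_nonneg.2 (le_of_lt ht)))

lemma abs_integral_Ioi_exp_mul_riemannLiouville_le (hα : 0 < α) (hx : 1 ≤ x) (hab : a ≤ b)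
    (hf : IntegrableOn f (Ioi a)) :
    |∫ t in Ioi b, Real.exp (-(x * (t - a))) * riemannLiouville a α f t| ≤
      Real.exp (-((x - 1) * (b - a))) * ∫ t in Ioi a, |f t| := by
  have hexp := integrableOn_exp_neg_mul_mul_Ioi zero_le_one hf.abs
  have hRL := integrableOn_exp_mul_riemannLiouville hα one_pos hexp
  have hpoint : ∀ t ∈ Ioi b, ‖Real.exp (-(x * (t - a))) * riemannLiouville a α f t‖ ≤
      Real.exp (-((x - 1) * (b - a))) *
        (Real.exp (-(1 * (t - a))) * riemannLiouville a α (fun s => |f s|) t) := by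
    intro t ht
    rw [norm_mul, Real.norm_eq_abs, Real.abs_exp, ← mul_assoc, ← Real.exp_add]
    gcongr
    · nlinarith [mem_Ioi.1 ht]
    · exact abs_riemannLiouville_le hα (hab.trans (le_of_lt ht))
  have hnonneg : 0 ≤ᵐ[volume.restrict (Ioi a)] fun t =>
      Real.exp (-(1 * (t - a))) * riemannLiouville a α (fun s => |f s|) t := by
    refine (ae_restrict_iff' measurableSet_Ioi).2 (Eventually.of_forall fun t ht => ?_)
    exact mul_nonneg (Real.exp_pos _).le
      ((abs_nonneg _).trans (abs_riemannLiouville_le hα (le_of_lt ht)))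
  calc |∫ t in Ioi b, Real.exp (-(x * (t - a))) * riemannLiouville a α f t|
      ≤ ∫ t in Ioi b, Real.exp (-((x - 1) * (b - a))) *
          (Real.exp (-(1 * (t - a))) * riemannLiouville a α (fun s => |f s|) t) :=
        norm_integral_le_of_norm_le ((hRL.mono_set (Ioi_subset_Ioi hab)).const_mul _)
          ((ae_restrict_iff' measurableSet_Ioi).2 (Eventually.of_forall hpoint))
    _ ≤ Real.exp (-((x - 1) * (b - a))) *
          ∫ t in Ioi a, Real.exp (-(1 * (t - a))) * riemannLiouville a α (fun s => |f s|) t := by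
        rw [integral_const_mul]
        exact mul_le_mul_of_nonneg_left
          (setIntegral_mono_set hRL hnonneg (Ioi_subset_Ioi hab).eventuallyLE) (Real.exp_pos _).le
    _ ≤ Real.exp (-((x - 1) * (b - a))) * ∫ t in Ioi a, |f t| := by
        rw [integral_exp_mul_riemannLiouville hα one_pos hexp, Real.one_rpow, one_mul]
        refine mul_le_mul_of_nonneg_left (setIntegral_mono_on hexp hf.abs measurableSet_Ioi
          fun t ht => ?_) (Real.exp_pos _).le
        refine mul_le_of_le_one_left (abs_nonneg _) (Real.exp_le_one_iff.2 ?_)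
        linarith [mem_Ioi.1 ht]

end RiemannLiouville

section RiemannLiouvilleOnIcc

variable {a b α x t : ℝ} {f g : ℝ → ℝ}

lemma integrableOn_Ioi_indicator_Icc (hf : IntegrableOn f (Icc a b)) :
    IntegrableOn ((Icc a b).indicator f) (Ioi a) :=
  ((integrable_indicator_iff measurableSet_Icc).2 hf).integrableOn

lemma riemannLiouville_indicator_Icc (ht : t ∈ Icc a b) :
    riemannLiouville a α ((Icc a b).indicator f) t = riemannLiouville a α f t :=
  riemannLiouville_congr ht.1 fun _ hs => indicator_of_mem (Icc_subset_Icc_right ht.2 hs) f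

lemma integrableOn_riemannLiouville (hα : 0 < α) (hf : IntegrableOn f (Icc a b)) :
    IntegrableOn (riemannLiouville a α f) (Icc a b) := by
  have hweighted := integrableOn_exp_mul_riemannLiouville hα one_pos
    (integrableOn_exp_neg_mul_mul_Ioi zero_le_one (integrableOn_Ioi_indicator_Icc hf))
  have hIcc := (integrableOn_Icc_iff_integrableOn_Ioc ..).2
    (hweighted.mono_set (Ioc_subset_Ioi_self : Ioc a b ⊆ Ioi a))
  refine (hIcc.continuousOn_mul (g := fun t => Real.exp (t - a)) (by fun_prop)
    isCompact_Icc).congr_fun (fun t ht => ?_) measurableSet_Icc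
  simp only [riemannLiouville_indicator_Icc ht]
  rw [← mul_assoc, ← Real.exp_add, one_mul, add_neg_cancel, Real.exp_zero, one_mul]

lemma integral_Ioi_mul_indicator_Icc (k : ℝ → ℝ) :
    ∫ t in Ioi a, k t * (Icc a b).indicator f t = ∫ t in Icc a b, k t * f t := by
  simp only [← indicator_mul_right (Icc a b) k f]
  rw [setIntegral_indicator measurableSet_Icc, integral_Icc_eq_integral_Ioc]
  congr 2
  grind

lemma abs_truncatedLaplace_riemannLiouville_sub_le (hα : 0 < α) (hx : 1 ≤ x) (hab : a ≤ b)
    (hf : IntegrableOn f (Icc a b)) :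
    |truncatedLaplace a b x (riemannLiouville a α f) - x ^ (-α) * truncatedLaplace a b x f| ≤
      Real.exp (-((x - 1) * (b - a))) * ∫ t in Icc a b, |f t| := by
  have hF := integrableOn_Ioi_indicator_Icc hf
  have hexp := integrableOn_exp_neg_mul_mul_Ioi (zero_le_one.trans hx) hF
  have hRL := integrableOn_exp_mul_riemannLiouville hα (one_pos.trans_le hx) hexp
  have hsplit := setIntegral_union Ioc_disjoint_Ioi_same measurableSet_Ioi
    (hRL.mono_set Ioc_subset_Ioi_self) (hRL.mono_set (Ioi_subset_Ioi hab))
  have hmain : ∫ t in Ioc a b, Real.exp (-(x * (t - a))) *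
      riemannLiouville a α ((Icc a b).indicator f) t =
        truncatedLaplace a b x (riemannLiouville a α f) := by
    rw [← integral_Icc_eq_integral_Ioc]
    exact setIntegral_congr_fun measurableSet_Icc fun t ht => by
      simp only [riemannLiouville_indicator_Icc ht]
  have htail := abs_integral_Ioi_exp_mul_riemannLiouville_le hα hx hab hF
  have habs : ∫ t in Ioi a, |(Icc a b).indicator f t| = ∫ t in Icc a b, |f t| := by
    simpa [← Real.norm_eq_abs, norm_indicator_eq_indicator_norm] using
      integral_Ioi_mul_indicator_Icc (f := fun t => ‖f t‖) fun _ => 1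
  rw [Ioc_union_Ioi_eq_Ioi hab, hmain,
    integral_exp_mul_riemannLiouville hα (one_pos.trans_le hx) hexp,
    integral_Ioi_mul_indicator_Icc] at hsplit
  rw [habs] at htail
  rwa [truncatedLaplace.eq_def a b x f, hsplit, sub_add_cancel_left, abs_neg]

end RiemannLiouvilleOnIcc

section Uniqueness

variable {a b τ x : ℝ} {g : ℝ → ℝ}

lemma ae_eq_zero_of_forall_intervalIntegral_eq_zero (hab : a ≤ b) (hg : IntegrableOn g (Icc a b))
    (hzero : ∀ t ∈ Ioo a b, ∫ s in a..t, g s = 0) : g =ᵐ[volume.restrict (Icc a b)] 0 := by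
  have hgi : IntervalIntegrable g volume a b :=
    (intervalIntegrable_iff_integrableOn_Icc_of_le hab).2 hg
  rw [EventuallyEq, ← restrict_Ioo_eq_restrict_Icc, ae_restrict_iff' measurableSet_Ioo]
  filter_upwards [hgi.ae_hasDerivAt_integral] with t hderiv ht
  rw [uIcc_of_le hab] at hderiv
  have hconst : (fun t => ∫ s in a..t, g s) =ᶠ[𝓝 t] fun _ => 0 := by
    filter_upwards [isOpen_Ioo.mem_nhds ht] with u hu using hzero u hu
  exact (hderiv (Ioo_subset_Icc_self ht) a (left_mem_Icc.2 hab)).unique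
    ((hasDerivAt_const t (0 : ℝ)).congr_of_eventuallyEq hconst)

lemma hasSum_integral_pow_div_factorial_mul {X : Type*} [MeasurableSpace X] {μ : Measure X}
    {u g : X → ℝ} {K : ℝ} (hu : AEStronglyMeasurable u μ) (huK : ∀ᵐ s ∂μ, |u s| ≤ K)
    (hg : Integrable g μ) :
    HasSum (fun k : ℕ => ∫ s, u s ^ k / k.factorial * g s ∂μ) (∫ s, Real.exp (u s) * g s ∂μ) := by
  have hle : ∀ k : ℕ, ∀ᵐ s ∂μ, ‖u s ^ k / k.factorial‖ ≤ K ^ k / k.factorial := by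
    intro k
    filter_upwards [huK] with s hs
    rw [norm_div, norm_pow, Real.norm_eq_abs, RCLike.norm_natCast]
    gcongr
  have hint : ∀ k : ℕ, Integrable (fun s => u s ^ k / k.factorial * g s) μ := fun k =>
    hg.bdd_mul ((hu.aemeasurable.pow_const k).div_const _).aestronglyMeasurable (hle k)
  have hsum : Summable fun k : ℕ => ∫ s, ‖u s ^ k / k.factorial * g s‖ ∂μ := by
    refine Summable.of_nonneg_of_le (fun k => integral_nonneg fun _ => norm_nonneg _) (fun k => ?_)
      ((Real.summable_pow_div_factorial K).mul_right (∫ s, ‖g s‖ ∂μ))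
    rw [← integral_const_mul]
    refine integral_mono_ae (hint k).norm (hg.norm.const_mul _) ?_
    filter_upwards [hle k] with s hs
    rw [norm_mul]
    gcongr
  simpa only [tsum_mul_right, Real.exp_eq_exp_ℝ, NormedSpace.exp_eq_tsum_div] using
    hasSum_integral_of_summable_integral_norm hint hsum

lemma hasSum_truncatedLaplace (hg : IntegrableOn g (Icc a b)) (τ : ℝ) (hx : 0 ≤ x) :
    HasSum (fun k : ℕ => (-1) ^ k / (k.factorial : ℝ) *
        (Real.exp (k * x * (τ - a)) * truncatedLaplace a b (k * x) g))
      (∫ s in Icc a b, Real.exp (-Real.exp (x * (τ - s))) * g s) := by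
  have hbound : ∀ᵐ s ∂volume.restrict (Icc a b),
      |-Real.exp (x * (τ - s))| ≤ Real.exp (x * (τ - a)) := by
    refine (ae_restrict_iff' measurableSet_Icc).2 (Eventually.of_forall fun s hs => ?_)
    rw [abs_neg, Real.abs_exp]
    gcongr
    exact hs.1
  convert hasSum_integral_pow_div_factorial_mul
    (Continuous.aestronglyMeasurable (by fun_prop)) hbound hg using 2 with k
  rw [truncatedLaplace, ← integral_const_mul, ← integral_const_mul]
  refine integral_congr_ae (Eventually.of_forall fun s => ?_)
  have hpow : (-Real.exp (x * (τ - s))) ^ k =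
      (-1) ^ k * (Real.exp (k * x * (τ - a)) * Real.exp (-(k * x * (s - a)))) := by
    rw [neg_pow, ← Real.exp_nat_mul, ← Real.exp_add]
    ring_nf
  simp only [hpow]
  ring

lemma hasSum_pow_succ_div_factorial (q : ℝ) :
    HasSum (fun k : ℕ => q ^ (k + 1) / ((k + 1).factorial : ℝ)) (Real.exp q - 1) := by
  have hexp := NormedSpace.expSeries_div_hasSum_exp q
  rw [← Real.exp_eq_exp_ℝ] at hexp
  simpa using (hasSum_nat_add_iff' 1).2 hexp

lemma tendsto_of_hasSum_exp_mul_div_factorial {p S : ℝ → ℝ} {c d : ℝ}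
    (hp : p =O[atTop] fun x => Real.exp (-(c * x))) (hdc : d < c)
    (hS : ∀ x, 0 ≤ x → HasSum (fun k : ℕ => (-1) ^ k / (k.factorial : ℝ) *
      (Real.exp (k * x * d) * p (k * x))) (S x)) :
    Tendsto S atTop (𝓝 (p 0)) := by
  obtain ⟨C, hC⟩ := hp.bound
  obtain ⟨x₀, hx₀⟩ := eventually_atTop.1 hC
  set q : ℝ → ℝ := fun x => Real.exp (-((c - d) * x)) with hq
  have hmajorant : Tendsto (fun x => C * (Real.exp (q x) - 1)) atTop (𝓝 0) := by
    have hq0 : Tendsto q atTop (𝓝 0) := Real.tendsto_exp_neg_atTop_nhds_zero.comp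
      (tendsto_id.const_mul_atTop (sub_pos.2 hdc))
    simpa using (((Real.continuous_exp.tendsto 0).comp hq0).sub_const 1).const_mul C
  refine tendsto_iff_norm_sub_tendsto_zero.2
    (squeeze_zero' (Eventually.of_forall fun _ => norm_nonneg _) ?_ hmajorant)
  filter_upwards [eventually_ge_atTop x₀, eventually_ge_atTop 0] with x hx hx'
  have htail := (hasSum_nat_add_iff' 1).2 (hS x hx')
  have hterm : ∀ k : ℕ, ‖(-1) ^ (k + 1) / ((k + 1).factorial : ℝ) *
      (Real.exp ((k + 1 : ℕ) * x * d) * p ((k + 1 : ℕ) * x))‖ ≤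
        C * (q x ^ (k + 1) / (k + 1).factorial) := by
    intro k
    have hpk := hx₀ ((k + 1 : ℕ) * x) (by push_cast; nlinarith [(Nat.cast_nonneg k : (0 : ℝ) ≤ k)])
    have hqk : q x ^ (k + 1) =
        Real.exp ((k + 1 : ℕ) * x * d) * Real.exp (-(c * ((k + 1 : ℕ) * x))) := by
      rw [hq, ← Real.exp_nat_mul, ← Real.exp_add]
      ring_nf
    rw [norm_mul, norm_div, norm_pow, norm_neg, norm_one, one_pow, norm_mul, RCLike.norm_natCast,
      Real.norm_eq_abs (Real.exp _), Real.abs_exp]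
    rw [Real.norm_eq_abs (Real.exp _), Real.abs_exp] at hpk
    calc _ ≤ 1 / ((k + 1).factorial : ℝ) * (Real.exp ((k + 1 : ℕ) * x * d) *
          (C * Real.exp (-(c * ((k + 1 : ℕ) * x))))) := by gcongr
      _ = _ := by rw [hqk]; ring
  have hle := tsum_of_norm_bounded ((hasSum_pow_succ_div_factorial (q x)).mul_left C) hterm
  rw [htail.tsum_eq] at hle
  simpa using hle

lemma tendsto_exp_neg_exp_mul_of_pos {d : ℝ} (hd : 0 < d) :
    Tendsto (fun x => Real.exp (-Real.exp (x * d))) atTop (𝓝 0) :=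
  Real.tendsto_exp_neg_atTop_nhds_zero.comp
    (Real.tendsto_exp_atTop.comp (tendsto_id.atTop_mul_const hd))

lemma tendsto_exp_neg_exp_mul_of_neg {d : ℝ} (hd : d < 0) :
    Tendsto (fun x => Real.exp (-Real.exp (x * d))) atTop (𝓝 1) := by
  have hinner : Tendsto (fun x => -Real.exp (x * d)) atTop (𝓝 0) := by
    simpa using (Real.tendsto_exp_atBot.comp (tendsto_id.atTop_mul_const_of_neg hd)).neg
  simpa [Function.comp_def] using (Real.continuous_exp.tendsto 0).comp hinner

/-- Phragmén's device: the double exponential approximates the indicator of `(τ, ∞)`, and its power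
series turns the integral into Laplace transforms at the points `0, x, 2x, …`. -/
lemma tendsto_integral_exp_neg_exp_mul {μ : Measure ℝ} (hτ : μ {τ} = 0) (hg : Integrable g μ) :
    Tendsto (fun x => ∫ s, Real.exp (-Real.exp (x * (τ - s))) * g s ∂μ) atTop
      (𝓝 (∫ s in Ioi τ, g s ∂μ)) := by
  rw [← integral_indicator measurableSet_Ioi]
  refine tendsto_integral_filter_of_dominated_convergence (fun s => ‖g s‖)
    (Eventually.of_forall fun x => (Continuous.aestronglyMeasurable (by fun_prop)).mul hg.1)
    (Eventually.of_forall fun x => Eventually.of_forall fun s => ?_) hg.norm ?_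
  · rw [norm_mul, Real.norm_eq_abs, Real.abs_exp]
    exact mul_le_of_le_one_left (norm_nonneg _)
      (Real.exp_le_one_iff.2 (neg_nonpos.2 (Real.exp_pos _).le))
  · filter_upwards [compl_mem_ae_iff.2 hτ] with s hs
    rcases lt_or_gt_of_ne hs with hlt | hgt
    · simpa [indicator_of_notMem (notMem_Ioi.2 hlt.le)] using
        (tendsto_exp_neg_exp_mul_of_pos (sub_pos.2 hlt)).mul_const (g s)
    · simpa [indicator_of_mem (mem_Ioi.2 hgt)] using
        (tendsto_exp_neg_exp_mul_of_neg (sub_neg.2 hgt)).mul_const (g s)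

lemma ae_eq_zero_of_isExpSmall_truncatedLaplace (hab : a ≤ b) (hg : IntegrableOn g (Icc a b))
    (hsmall : IsExpSmall (b - a) fun x => truncatedLaplace a b x g) :
    g =ᵐ[volume.restrict (Icc a b)] 0 := by
  refine ae_eq_zero_of_forall_intervalIntegral_eq_zero hab hg fun τ hτ => ?_
  obtain ⟨c, hτc, hcb⟩ := exists_between (show τ - a < b - a by linarith [hτ.2])
  have hwhole := tendsto_of_hasSum_exp_mul_div_factorial (hsmall c hcb) hτc fun x hx =>
    hasSum_truncatedLaplace hg τ hx
  have hright := tendsto_integral_exp_neg_exp_mul (measure_singleton τ) hg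
  have heq := tendsto_nhds_unique hwhole hright
  have hgi : IntervalIntegrable g volume a b :=
    (intervalIntegrable_iff_integrableOn_Icc_of_le hab).2 hg
  have hτ' : τ ∈ uIcc a b := by rw [uIcc_of_le hab]; exact Ioo_subset_Icc_self hτ
  have hadd := intervalIntegral.integral_add_adjacent_intervals
     (hgi.mono_set (uIcc_subset_uIcc_left hτ')) (hgi.mono_set (uIcc_subset_uIcc_right hτ'))
  have hset : Ioi τ ∩ Icc a b = Ioc τ b := by grind
  rw [Measure.restrict_restrict measurableSet_Ioi, hset,
    ← intervalIntegral.integral_of_le hτ.2.le] at heq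
  simp only [truncatedLaplace, zero_mul, neg_zero, Real.exp_zero, one_mul] at heq
  rw [integral_Icc_eq_integral_Ioc, ← intervalIntegral.integral_of_le hab, ← hadd] at heq
  exact add_eq_right.1 heq

end Uniqueness

section Resolvent

variable {a b x t : ℝ} {g : ℝ → ℝ}

/-- The solution `w` of `w' = x w - g` with `w b = 0`. As `x → ∞` it stays bounded by the `L¹` norm
of `g`, unlike the solution with initial condition at the left endpoint. It serves to invert
`1 - x V`, where `V` is integration from `a`: `r = g - x w` satisfies `r - x V r = g - x w(a)`. -/
noncomputable def expTail (b x : ℝ) (g : ℝ → ℝ) (t : ℝ) : ℝ :=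
  ∫ s in t..b, Real.exp (-(x * (s - t))) * g s

lemma expTail_eq_exp_mul_integral (b x : ℝ) (g : ℝ → ℝ) :
    expTail b x g = fun t => -Real.exp (x * t) * ∫ s in b..t, Real.exp (-(x * s)) * g s := by
  ext t
  rw [expTail, intervalIntegral.integral_symm, neg_mul, ← intervalIntegral.integral_const_mul]
  congr 2 with s
  rw [← mul_assoc, ← Real.exp_add]
  ring_nf

lemma expTail_left (hab : a ≤ b) : expTail b x g a = truncatedLaplace a b x g := by
  rw [expTail, truncatedLaplace, intervalIntegral.integral_of_le hab, integral_Icc_eq_integral_Ioc]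

lemma absolutelyContinuousOnInterval_expTail (hg : IntervalIntegrable g volume a b) (x : ℝ) :
    AbsolutelyContinuousOnInterval (expTail b x g) a b := by
  rw [expTail_eq_exp_mul_integral]
  have hexp : AbsolutelyContinuousOnInterval (fun t => -Real.exp (x * t)) a b :=
    ContDiffOn.absolutelyContinuousOnInterval (ContDiff.contDiffOn (by fun_prop))
  exact hexp.fun_mul ((hg.continuousOn_mul
    (by fun_prop)).absolutelyContinuousOnInterval_intervalIntegral right_mem_uIcc)

lemma ae_hasDerivAt_expTail (hg : IntervalIntegrable g volume a b) (x : ℝ) :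
    ∀ᵐ t, t ∈ uIcc a b → HasDerivAt (expTail b x g) (x * expTail b x g t - g t) t := by
  have hint := hg.continuousOn_mul (g := fun s => Real.exp (-(x * s))) (by fun_prop)
  filter_upwards [hint.ae_hasDerivAt_integral] with t hderiv ht
  have hexp : HasDerivAt (fun t => -Real.exp (x * t)) (-(Real.exp (x * t) * (x * 1))) t :=
    (((hasDerivAt_id t).const_mul x).exp).neg
  have hcancel : Real.exp (x * t) * Real.exp (-(x * t)) = 1 := by
    rw [← Real.exp_add, add_neg_cancel, Real.exp_zero]
  rw [expTail_eq_exp_mul_integral]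
  refine (hexp.mul (hderiv ht b right_mem_uIcc)).congr_deriv ?_
  linear_combination (-g t) * hcancel

lemma integral_mul_expTail_sub (hg : IntervalIntegrable g volume a b) (ht : t ∈ uIcc a b) :
    ∫ s in a..t, (x * expTail b x g s - g s) = expTail b x g t - expTail b x g a := by
  have hsub : uIcc a t ⊆ uIcc a b := uIcc_subset_uIcc_left ht
  rw [← ((absolutelyContinuousOnInterval_expTail hg x).mono hsub).integral_deriv_eq_sub]
  refine intervalIntegral.integral_congr_ae ?_
  filter_upwards [ae_hasDerivAt_expTail hg x] with s hderiv hs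
  exact (hderiv (hsub (uIoc_subset_uIcc hs))).deriv.symm

lemma abs_expTail_le (hg : IntegrableOn g (Icc a b)) (hx : 0 ≤ x) (ht : t ∈ Icc a b) :
    |expTail b x g t| ≤ ∫ s in Icc a b, ‖g s‖ := by
  have hsub : Ioc t b ⊆ Icc a b := fun s hs => ⟨ht.1.trans hs.1.le, hs.2⟩
  have hle : ∀ s ∈ Ioc t b, ‖Real.exp (-(x * (s - t))) * g s‖ ≤ ‖g s‖ := by
    intro s hs
    rw [norm_mul, Real.norm_eq_abs, Real.abs_exp]
    refine mul_le_of_le_one_left (norm_nonneg _) (Real.exp_le_one_iff.2 ?_)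
    exact neg_nonpos.2 (mul_nonneg hx (sub_nonneg.2 hs.1.le))
  calc |expTail b x g t| = ‖∫ s in Ioc t b, Real.exp (-(x * (s - t))) * g s‖ := by
        rw [expTail, intervalIntegral.integral_of_le ht.2, Real.norm_eq_abs]
    _ ≤ ∫ s in Ioc t b, ‖g s‖ := norm_integral_le_of_norm_le (hg.mono_set hsub).norm
        ((ae_restrict_iff' measurableSet_Ioc).2 (Eventually.of_forall hle))
    _ ≤ ∫ s in Icc a b, ‖g s‖ := setIntegral_mono_set hg.norm
        (Eventually.of_forall fun _ => norm_nonneg _) hsub.eventuallyLE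

lemma integral_norm_sub_mul_expTail_le (hab : a ≤ b) (hx : 0 ≤ x) (hg : IntegrableOn g (Icc a b)) :
    ∫ t in Icc a b, ‖g t - x * expTail b x g t‖ ≤
      (1 + x * (b - a)) * ∫ t in Icc a b, ‖g t‖ := by
  have hbound : ∀ t ∈ Icc a b,
      ‖g t - x * expTail b x g t‖ ≤ ‖g t‖ + x * ∫ t in Icc a b, ‖g t‖ := by
    intro t ht
    refine (norm_sub_le _ _).trans (add_le_add_right ?_ _)
    rw [norm_mul, Real.norm_of_nonneg hx]
    exact mul_le_mul_of_nonneg_left (abs_expTail_le hg hx ht) hx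
  have hconst : IntegrableOn (fun _ : ℝ => x * ∫ t in Icc a b, ‖g t‖) (Icc a b) :=
    integrableOn_const (by simp)
  refine (integral_mono_of_nonneg (Eventually.of_forall fun _ => norm_nonneg _)
    (hg.norm.add hconst)
    ((ae_restrict_iff' measurableSet_Icc).2 (Eventually.of_forall hbound))).trans_eq ?_
  simp only [Pi.add_apply]
  rw [integral_add hg.norm hconst, setIntegral_const, Real.volume_real_Icc_of_le hab, smul_eq_mul]
  ring

lemma sub_mul_integral_sub_mul_expTail (hab : a ≤ b) (hg : IntegrableOn g (Icc a b))
    (ht : t ∈ Icc a b) :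
    (g t - x * expTail b x g t) - x * ∫ s in a..t, (g s - x * expTail b x g s) =
      g t - x * truncatedLaplace a b x g := by
  have hgi : IntervalIntegrable g volume a b :=
    (intervalIntegrable_iff_integrableOn_Icc_of_le hab).2 hg
  have hint := integral_mul_expTail_sub (x := x) hgi (Icc_subset_uIcc ht)
  have hneg : ∫ s in a..t, (g s - x * expTail b x g s) =
      -∫ s in a..t, (x * expTail b x g s - g s) := by
    simp only [← intervalIntegral.integral_neg, neg_sub]
  rw [hneg, hint, expTail_left hab]
  ring

lemma integrableOn_sub_mul_expTail (hab : a ≤ b) (hg : IntegrableOn g (Icc a b)) (x : ℝ) :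
    IntegrableOn (fun t => g t - x * expTail b x g t) (Icc a b) := by
  have hgi : IntervalIntegrable g volume a b :=
    (intervalIntegrable_iff_integrableOn_Icc_of_le hab).2 hg
  have hcont := (absolutelyContinuousOnInterval_expTail hgi x).continuousOn
  rw [uIcc_of_le hab] at hcont
  exact hg.sub (hcont.integrableOn_Icc.const_mul x)

end Resolvent

section LaplaceFunctional

variable {a b α x : ℝ}

/-- The space `L¹[a, b]`. -/
abbrev L1Icc (a b : ℝ) : Type :=
  Lp ℝ 1 (volume.restrict (Icc a b))

lemma memLp_top_exp_neg_mul_sub (a b x : ℝ) :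
    MemLp (fun t => Real.exp (-(x * (t - a)))) ⊤ (volume.restrict (Icc a b)) := by
  refine memLp_top_of_bound (Continuous.aestronglyMeasurable (by fun_prop))
    (Real.exp (|x| * (b - a))) ((ae_restrict_iff' measurableSet_Icc).2
      (Eventually.of_forall fun t ht => ?_))
  rw [Real.norm_eq_abs, Real.abs_exp, ← neg_mul]
  gcongr
  · exact sub_nonneg.2 ht.1
  · exact neg_le_abs x
  · exact ht.2

/-- `truncatedLaplace a b x` as a continuous functional on `L¹[a, b]`. -/
noncomputable def laplaceFunctional (a b x : ℝ) : StrongDual ℝ (L1Icc a b) :=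
  haveI : ENNReal.HolderConjugate ⊤ 1 := .top_one
  (ContinuousLinearMap.mul ℝ ℝ).lpPairing (volume.restrict (Icc a b)) ⊤ 1
    (memLp_top_exp_neg_mul_sub a b x).toLp

lemma truncatedLaplace_congr_ae {g h : ℝ → ℝ} (hgh : g =ᵐ[volume.restrict (Icc a b)] h) :
    truncatedLaplace a b x g = truncatedLaplace a b x h :=
  integral_congr_ae (hgh.mono fun t ht => by simp only [ht])

lemma laplaceFunctional_apply (a b x : ℝ) (g : L1Icc a b) :
    laplaceFunctional a b x g = truncatedLaplace a b x g := by
  rw [laplaceFunctional, ContinuousLinearMap.lpPairing_eq_integral]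
  refine integral_congr_ae ?_
  filter_upwards [(memLp_top_exp_neg_mul_sub a b x).coeFn_toLp] with t ht
  rw [ht, ContinuousLinearMap.mul_apply']

lemma norm_laplaceFunctional_le_one (a b : ℝ) (hx : 0 ≤ x) : ‖laplaceFunctional a b x‖ ≤ 1 := by
  refine ContinuousLinearMap.opNorm_le_bound _ zero_le_one fun g => ?_
  rw [laplaceFunctional_apply, one_mul, L1.norm_eq_integral_norm]
  refine norm_integral_le_of_norm_le (L1.integrable_coeFn g).norm
    ((ae_restrict_iff' measurableSet_Icc).2 (Eventually.of_forall fun t ht => ?_))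
  rw [norm_mul, Real.norm_eq_abs, Real.abs_exp]
  refine mul_le_of_le_one_left (norm_nonneg _) (Real.exp_le_one_iff.2 ?_)
  exact neg_nonpos.2 (mul_nonneg hx (sub_nonneg.2 ht.1))

lemma laplaceFunctional_isBigO_one (a b : ℝ) :
    laplaceFunctional a b =O[atTop] fun _ => (1 : ℝ) := by
  refine Asymptotics.IsBigO.of_bound 1 ?_
  filter_upwards [eventually_ge_atTop 0] with x hx
  simpa using norm_laplaceFunctional_le_one a b hx

lemma laplaceFunctional_const_one (hab : a ≤ b) (hx : x ≠ 0) :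
    laplaceFunctional a b x (Lp.const 1 _ 1) = (1 - Real.exp (-(x * (b - a)))) / x := by
  rw [laplaceFunctional_apply, truncatedLaplace_congr_ae (Lp.coeFn_const 1 _ 1), truncatedLaplace,
    integral_Icc_eq_integral_Ioc, ← intervalIntegral.integral_of_le hab]
  have hsub := intervalIntegral.integral_comp_mul_sub (a := a) (b := b) Real.exp
    (neg_ne_zero.2 hx) (-(x * a))
  simp only [Function.const_apply, mul_one]
  convert hsub using 1
  · congr 1 with t
    ring_nf
  · rw [integral_exp, smul_eq_mul]
    simp only [neg_mul, add_comm, sub_neg_eq_add, sub_self, Real.exp_zero]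
    field_simp
    ring_nf

lemma rpow_neg_one_isBigO_laplaceFunctional (hab : a < b) :
    (fun x : ℝ => x ^ (-1 : ℝ)) =O[atTop] laplaceFunctional a b := by
  have hdecay : Tendsto (fun x => Real.exp (-(x * (b - a)))) atTop (𝓝 0) :=
    Real.tendsto_exp_neg_atTop_nhds_zero.comp (tendsto_id.atTop_mul_const (sub_pos.2 hab))
  refine Asymptotics.IsBigO.of_bound (2 * ‖(Lp.const 1 _ 1 : L1Icc a b)‖) ?_
  filter_upwards [hdecay.eventually_le_const one_half_pos, eventually_gt_atTop 0] with x hle hx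
  have hval := (laplaceFunctional a b x).le_opNorm (Lp.const 1 _ 1)
  rw [laplaceFunctional_const_one hab.le hx.ne'] at hval
  have hlower : x⁻¹ ≤ 2 * ‖(1 - Real.exp (-(x * (b - a)))) / x‖ := by
    rw [div_eq_mul_inv, norm_mul, norm_inv, Real.norm_of_nonneg hx.le, ← mul_assoc]
    refine le_mul_of_one_le_left (inv_nonneg.2 hx.le) ?_
    rw [Real.norm_of_nonneg (by linarith)]
    linarith
  rw [Real.rpow_neg_one, norm_inv, Real.norm_of_nonneg hx.le]
  linarith

end LaplaceFunctional

section Characterization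

variable {a b α x : ℝ} {f h : L1Icc a b}

lemma abs_laplaceFunctional_sub_le (hab : a ≤ b) (hα : 0 < α) (hx : 1 ≤ x)
    (hfh : h =ᵐ[volume.restrict (Icc a b)] riemannLiouville a α f) :
    |laplaceFunctional a b x h - x ^ (-α) * laplaceFunctional a b x f| ≤
      Real.exp (-((x - 1) * (b - a))) * ‖f‖ := by
  rw [laplaceFunctional_apply, laplaceFunctional_apply, truncatedLaplace_congr_ae hfh,
    L1.norm_eq_integral_norm]
  exact abs_truncatedLaplace_riemannLiouville_sub_le hα hx hab (L1.integrable_coeFn f)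

lemma hasSymbol_of_ae_eq_riemannLiouville (hab : a ≤ b) (hα : 0 < α)
    {A : L1Icc a b →L[ℝ] L1Icc a b}
    (hA : ∀ f, A f =ᵐ[volume.restrict (Icc a b)] riemannLiouville a α f) :
    HasSymbol (laplaceFunctional a b) (b - a) A fun x => x ^ (-α) := by
  refine isExpSmall_of_norm_le (C := 1) fun x hx => ?_
  rw [mul_one]
  exact ContinuousLinearMap.opNorm_le_bound _ (Real.exp_pos _).le fun f =>
    abs_laplaceFunctional_sub_le hab hα hx (hA f)

lemma ae_eq_riemannLiouville_of_isExpSmall (hab : a ≤ b) (hα : 0 < α)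
    (hfh : IsExpSmall (b - a) fun x =>
      laplaceFunctional a b x h - x ^ (-α) * laplaceFunctional a b x f) :
    h =ᵐ[volume.restrict (Icc a b)] riemannLiouville a α f := by
  have hRL : IntegrableOn (riemannLiouville a α f) (Icc a b) :=
    integrableOn_riemannLiouville hα (L1.integrable_coeFn f)
  obtain ⟨k, hk⟩ : ∃ k : L1Icc a b, k =ᵐ[volume.restrict (Icc a b)] riemannLiouville a α f :=
    ⟨hRL.toL1, hRL.coeFn_toL1⟩
  have hsmall : IsExpSmall (b - a) fun x => laplaceFunctional a b x (h - k) := by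
    have hkf : IsExpSmall (b - a) fun x =>
        -(laplaceFunctional a b x k - x ^ (-α) * laplaceFunctional a b x f) :=
      isExpSmall_of_norm_le fun x hx => by
        rw [norm_neg]
        exact abs_laplaceFunctional_sub_le hab hα hx hk
    exact (hfh.add hkf).congr_left fun x => by rw [map_sub]; ring
  simp only [laplaceFunctional_apply] at hsmall
  have hzero := ae_eq_zero_of_isExpSmall_truncatedLaplace hab (L1.integrable_coeFn _) hsmall
  filter_upwards [hzero, Lp.coeFn_sub h k, hk] with t h0 hsub hkt
  rw [hsub, Pi.sub_apply, Pi.zero_apply, sub_eq_zero] at h0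
  rw [h0, hkt]

lemma ae_eq_riemannLiouville_of_hasSymbol (hab : a ≤ b) (hα : 0 < α)
    {A : L1Icc a b →L[ℝ] L1Icc a b}
    (hA : HasSymbol (laplaceFunctional a b) (b - a) A fun x => x ^ (-α)) (f : L1Icc a b) :
    A f =ᵐ[volume.restrict (Icc a b)] riemannLiouville a α f :=
  ae_eq_riemannLiouville_of_isExpSmall hab hα (hA.of_isBigO
    (Asymptotics.IsBigO.of_bound ‖f‖ (Eventually.of_forall fun x =>
      (((laplaceFunctional a b x).comp A - x ^ (-α) • laplaceFunctional a b x).le_opNorm f).trans_eq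
        (mul_comm _ _))))

lemma ae_eq_riemannLiouville_of_tendsto (hab : a ≤ b) (hα : 0 < α) {ι : Type*} {l : Filter ι}
    [l.NeBot] {q : ι → ℝ} {H : ι → L1Icc a b} (hq : Tendsto q l (𝓝 α)) (hH : Tendsto H l (𝓝 h))
    (hqH : ∀ᶠ i in l, H i =ᵐ[volume.restrict (Icc a b)] riemannLiouville a (q i) f) :
    h =ᵐ[volume.restrict (Icc a b)] riemannLiouville a α f := by
  refine ae_eq_riemannLiouville_of_isExpSmall hab hα (isExpSmall_of_norm_le (C := ‖f‖)
    fun x hx => ?_)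
  have hlim : Tendsto (fun i => |laplaceFunctional a b x (H i) -
      x ^ (-q i) * laplaceFunctional a b x f|) l
        (𝓝 |laplaceFunctional a b x h - x ^ (-α) * laplaceFunctional a b x f|) := by
    have hpow : Tendsto (fun i => x ^ (-q i)) l (𝓝 (x ^ (-α))) :=
      ((Real.continuous_const_rpow (zero_lt_one.trans_le hx).ne').tendsto (-α)).comp hq.neg
    exact ((((laplaceFunctional a b x).continuous.tendsto h).comp hH).sub
      (hpow.mul_const _)).abs
  refine le_of_tendsto hlim ?_
  filter_upwards [hqH, hq.eventually_const_lt hα] with i hi hqi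
  exact abs_laplaceFunctional_sub_le hab hqi hx hi

end Characterization

section Semigroup

variable {a b : ℝ} {V : L1Icc a b →L[ℝ] L1Icc a b}

lemma exists_sub_smul_eq_of_ae_eq_integral (hab : a ≤ b)
    (hV : ∀ f, V f =ᵐ[volume.restrict (Icc a b)] fun t => ∫ s in a..t, f s) {x : ℝ} (hx : 0 ≤ x)
    (g : L1Icc a b) :
    ∃ r, r - x • V r = g - (x * laplaceFunctional a b x g) • Lp.const 1 _ 1 ∧
      ‖r‖ ≤ (1 + x * (b - a)) * ‖g‖ := by
  have hg : IntegrableOn g (Icc a b) := L1.integrable_coeFn g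
  have hint := integrableOn_sub_mul_expTail hab hg x
  obtain ⟨r, hr⟩ : ∃ r : L1Icc a b,
      r =ᵐ[volume.restrict (Icc a b)] fun t => g t - x * expTail b x g t :=
    ⟨hint.toL1, hint.coeFn_toL1⟩
  have hprimitive : ∀ t ∈ Icc a b,
      ∫ s in a..t, r s = ∫ s in a..t, (g s - x * expTail b x g s) := by
    intro t ht
    refine intervalIntegral.integral_congr_ae_restrict (ae_restrict_of_ae_restrict_of_subset ?_ hr)
    rw [uIoc_of_le ht.1]
    exact Ioc_subset_Icc_self.trans (Icc_subset_Icc_right ht.2)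
  rw [laplaceFunctional_apply]
  refine ⟨r, Lp.ext ?_, ?_⟩
  · filter_upwards [Lp.coeFn_sub r (x • V r), Lp.coeFn_smul x (V r),
      Lp.coeFn_sub g ((x * truncatedLaplace a b x g) • Lp.const 1 _ 1),
      Lp.coeFn_smul (x * truncatedLaplace a b x g)
        (Lp.const 1 (volume.restrict (Icc a b)) (1 : ℝ)),
      Lp.coeFn_const 1 (volume.restrict (Icc a b)) (1 : ℝ), hV r, hr,
      ae_restrict_mem measurableSet_Icc] with t hsubV hsmulV hsubg hsmul hconst hVt hrt ht
    simp only [hsubV, hsmulV, hsubg, hsmul, hconst, hVt, hrt, hprimitive t ht, Pi.sub_apply,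
      Pi.smul_apply, smul_eq_mul, Function.const_apply, mul_one]
    exact sub_mul_integral_sub_mul_expTail hab hg ht
  · rw [L1.norm_eq_integral_norm, L1.norm_eq_integral_norm]
    exact (integral_congr_ae (hr.fun_comp norm)).trans_le
      (integral_norm_sub_mul_expTail_le hab hx hg)

lemma hasSymbol_of_ae_eq_integral (hab : a ≤ b)
    (hV : ∀ f, V f =ᵐ[volume.restrict (Icc a b)] fun t => ∫ s in a..t, f s) :
    HasSymbol (laplaceFunctional a b) (b - a) V fun x => x ^ (-1 : ℝ) :=
  hasSymbol_of_ae_eq_riemannLiouville hab one_pos fun f => by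
    simpa only [funext (riemannLiouville_one a f)] using hV f

lemma exists_hasSymbol_of_commute (hab : a ≤ b)
    (hV : ∀ f, V f =ᵐ[volume.restrict (Icc a b)] fun t => ∫ s in a..t, f s)
    {A : L1Icc a b →L[ℝ] L1Icc a b} (hAV : A.comp V = V.comp A) :
    ∃ m : ℝ → ℝ, m =O[atTop] (fun x => x ^ (1 : ℝ)) ∧
      HasSymbol (laplaceFunctional a b) (b - a) A m := by
  set e : L1Icc a b := Lp.const 1 _ 1
  refine ⟨fun x => x * laplaceFunctional a b x (A e), ?_,
    (hasSymbol_of_ae_eq_integral hab hV).of_commute (N := 2) hAV ?_⟩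
  · refine Asymptotics.IsBigO.of_bound ‖A e‖ ?_
    filter_upwards [eventually_ge_atTop 0] with x hx
    rw [norm_mul, Real.rpow_one, mul_comm]
    refine mul_le_mul_of_nonneg_right ?_ (norm_nonneg x)
    simpa using (laplaceFunctional a b x).le_of_opNorm_le (norm_laplaceFunctional_le_one a b hx)
      (A e)
  · filter_upwards [eventually_ge_atTop (1 + (b - a))] with x hx g
    have hx1 : 1 ≤ x := by linarith
    obtain ⟨r, hr, hrg⟩ := exists_sub_smul_eq_of_ae_eq_integral hab hV (zero_le_one.trans hx1) g
    refine ⟨r, hr, hrg.trans (mul_le_mul_of_nonneg_right ?_ (norm_nonneg g))⟩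
    rw [Real.rpow_two]
    nlinarith

lemma tendsto_natCeil_mul_two_pow_div {α : ℝ} (hα : 0 ≤ α) :
    Tendsto (fun n : ℕ => (⌈α * 2 ^ n⌉₊ : ℝ) / 2 ^ n) atTop (𝓝 α) :=
  (tendsto_nat_ceil_mul_div_atTop hα).comp (tendsto_pow_atTop_atTop_of_one_lt one_lt_two)

variable {T : ℝ → L1Icc a b →L[ℝ] L1Icc a b}

lemma ae_eq_riemannLiouville_dyadic (hab : a < b)
    (h_interp : ∀ f, T 1 f =ᵐ[volume.restrict (Icc a b)] fun t => ∫ s in a..t, f s)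
    (h_index : ∀ α β : ℝ, 0 < α → 0 < β → (T α).comp (T β) = T (α + β))
    {k : ℕ} (hk : 1 ≤ k) (n : ℕ) (f : L1Icc a b) :
    T (k / 2 ^ n) f =ᵐ[volume.restrict (Icc a b)] riemannLiouville a (k / 2 ^ n) f := by
  have hsymbol : ∀ α, 0 < α → ∃ m : ℝ → ℝ, m =O[atTop] (fun x => x ^ (1 : ℝ)) ∧
      HasSymbol (laplaceFunctional a b) (b - a) (T α) m := fun α hα =>
    exists_hasSymbol_of_commute hab.le h_interp
      (by rw [h_index α 1 hα one_pos, h_index 1 α one_pos hα, add_comm])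
  exact ae_eq_riemannLiouville_of_hasSymbol hab.le (by positivity)
    (hasSymbol_rpow_dyadic (sub_pos.2 hab) (laplaceFunctional_isBigO_one a b)
      (rpow_neg_one_isBigO_laplaceFunctional hab) h_index hsymbol
      (hasSymbol_of_ae_eq_integral hab.le h_interp) hk n) f

end Semigroup

theorem cartwright_mcmullen_general (a b : ℝ) (hab : a < b) (T : ℝ → L1Icc a b →L[ℝ] L1Icc a b)
    (h_interp : ∀ f, T 1 f =ᵐ[volume.restrict (Icc a b)] fun t => ∫ s in a..t, f s)
    (h_index : ∀ α β : ℝ, 0 < α → 0 < β → (T α).comp (T β) = T (α + β))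
    (h_cont : ∀ f, ContinuousOn (fun α => T α f) (Ioi (0 : ℝ))) (α : ℝ) (hα : 0 < α)
    (f : L1Icc a b) : T α f =ᵐ[volume.restrict (Icc a b)] riemannLiouville a α f := by
  have hceil : ∀ n : ℕ, 1 ≤ ⌈α * 2 ^ n⌉₊ := fun n => Nat.ceil_pos.2 (by positivity)
  have hq := tendsto_natCeil_mul_two_pow_div hα.le
  have hT := ((h_cont f).continuousAt (Ioi_mem_nhds hα)).tendsto.comp hq
  exact ae_eq_riemannLiouville_of_tendsto hab.le hα hq hT (Eventually.of_forall fun n =>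
    ae_eq_riemannLiouville_dyadic hab h_interp h_index (hceil n) n f)

/-- **Cartwright–McMullen**: the Riemann–Liouville fractional integrals form the unique
family of bounded linear operators on `L¹[a,b]` interpolating the integration operator,
satisfying the index law, and depending continuously (in operator norm) on the order. -/
theorem cartwright_mcmullen (a b : ℝ) (hab : a < b)
    (T : ℝ → (Lp ℝ 1 (volume.restrict (Icc a b)) →L[ℝ] Lp ℝ 1 (volume.restrict (Icc a b))))
    (h_interp : ∀ f : Lp ℝ 1 (volume.restrict (Icc a b)),
      (T 1 f : ℝ → ℝ) =ᵐ[volume.restrict (Icc a b)] fun t => ∫ s in a..t, f s)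
    (h_index : ∀ α β : ℝ, 0 < α → 0 < β → (T α).comp (T β) = T (α + β))
    (h_cont : ContinuousOn T (Ioi (0:ℝ))) :
    ∀ α : ℝ, 0 < α → ∀ f : Lp ℝ 1 (volume.restrict (Icc a b)),
      (T α f : ℝ → ℝ) =ᵐ[volume.restrict (Icc a b)]
        fun t => (1 / Real.Gamma α) * ∫ s in a..t, (t - s) ^ (α - 1) * f s := by
  exact cartwright_mcmullen_general a b hab T h_interp h_index fun f =>
    h_cont.clm_apply continuousOn_const
end

section
/- For every α > 0, the Riemann–Liouville fractional integral operator I^α : L¹[0,b] → L¹[0,b] is injective: if f, g ∈ L¹[0,b] satisfy I^α f = I^α g almost everywhere on [0,b], then f = g almost everywhere on [0,b]. -/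
open MeasureTheory Set Filter Topology

open Classical in
/-- Riemann–Liouville fractional integral of order `α` with base point `0`;
`RL 0` is the identity operator. -/
noncomputable def RL (α : ℝ) (f : ℝ → ℝ) : ℝ → ℝ := fun t =>
  if α = 0 then f t
  else (1 / Real.Gamma α) * ∫ s in (0:ℝ)..t, (t - s) ^ (α - 1) * f s

/-!
The operators `I^α` form a semigroup: extend `f` by zero to `(0, ∞)`; after multiplication by
`exp (-t)`, `I^α f` is the convolution of the integrable function `exp (-t) * f t` with the density
of a gamma distribution, and gamma densities are stable under convolution by the beta integral.
Hence, for a natural number `n ≥ α`, the equality `I^α f = I^α g` yields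
`I^n f = I^(n-α) (I^α f) = I^(n-α) (I^α g) = I^n g`. Now `I^n` is the `n`-th power of `I^1`, which
is injective by the Lebesgue differentiation theorem.
-/

open ContinuousLinearMap (mul)
open scoped Convolution

section Convolution

variable {𝕜 G E E' E'' F F' F'' : Type*} [RCLike 𝕜]
  [NormedAddCommGroup E] [NormedSpace 𝕜 E] [NormedAddCommGroup E'] [NormedSpace 𝕜 E']
  [NormedAddCommGroup E''] [NormedSpace 𝕜 E'']
  [NormedAddCommGroup F] [NormedSpace ℝ F] [NormedSpace 𝕜 F] [CompleteSpace F]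
  [NormedAddCommGroup F'] [NormedSpace ℝ F'] [NormedSpace 𝕜 F'] [CompleteSpace F']
  [NormedAddCommGroup F''] [NormedSpace ℝ F''] [NormedSpace 𝕜 F''] [CompleteSpace F'']
  [AddGroup G] [MeasurableSpace G] [MeasurableAdd₂ G] [MeasurableNeg G]
  {μ : Measure G} [SFinite μ] [μ.IsAddRightInvariant]

theorem ae_convolution_assoc (L : E →L[𝕜] E' →L[𝕜] F) (L₂ : F →L[𝕜] E'' →L[𝕜] F')
    (L₃ : E →L[𝕜] F'' →L[𝕜] F') (L₄ : E' →L[𝕜] E'' →L[𝕜] F'')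
    (hL : ∀ x y z, L₂ (L x y) z = L₃ x (L₄ y z)) {f : G → E} {g : G → E'} {k : G → E''}
    (hf : Integrable f μ) (hg : Integrable g μ) (hk : Integrable k μ) :
    (f ⋆[L, μ] g) ⋆[L₂, μ] k =ᵐ[μ] f ⋆[L₃, μ] (g ⋆[L₄, μ] k) := by
  have hgk : Integrable ((fun x => ‖g x‖) ⋆[mul ℝ ℝ, μ] fun x => ‖k x‖) μ :=
    hg.norm.integrable_convolution (mul ℝ ℝ) hk.norm
  filter_upwards [hf.norm.ae_convolution_exists (mul ℝ ℝ) hgk] with x hfgk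
  exact convolution_assoc L L₂ L₃ L₄ hL hf.1 hg.1 hk.1 (hf.ae_convolution_exists L hg)
    (hg.norm.ae_convolution_exists (mul ℝ ℝ) hk.norm) hfgk

end Convolution

theorem ae_eq_of_intervalIntegral_ae_eq {E : Type*} [NormedAddCommGroup E] [NormedSpace ℝ E]
    [CompleteSpace E] {f g : ℝ → E} {a b : ℝ} (hab : a ≤ b)
    (hf : IntegrableOn f (Ioc a b)) (hg : IntegrableOn g (Ioc a b))
    (h : (fun x => ∫ t in a..x, f t) =ᵐ[volume.restrict (Ioc a b)] fun x => ∫ t in a..x, g t) :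
    f =ᵐ[volume.restrict (Ioc a b)] g := by
  rw [← intervalIntegrable_iff_integrableOn_Ioc_of_le hab] at hf hg
  rw [← restrict_Ioo_eq_restrict_Ioc] at h ⊢
  have Ioo_subset : Ioo a b ⊆ uIcc a b := Ioo_subset_Icc_self.trans Icc_subset_uIcc
  have primitives_eq : EqOn (fun x => ∫ t in a..x, f t) (fun x => ∫ t in a..x, g t) (Ioo a b) :=
    Measure.eqOn_open_of_ae_eq h isOpen_Ioo
      ((intervalIntegral.continuousOn_primitive_interval' hf left_mem_uIcc).mono Ioo_subset)
      ((intervalIntegral.continuousOn_primitive_interval' hg left_mem_uIcc).mono Ioo_subset)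
  rw [EventuallyEq, ae_restrict_iff' measurableSet_Ioo]
  filter_upwards [hf.ae_hasDerivAt_integral, hg.ae_hasDerivAt_integral] with x hfx hgx hx
  have hf' := hfx (Ioo_subset hx) a left_mem_uIcc
  have hg' := hgx (Ioo_subset hx) a left_mem_uIcc
  exact hf'.unique
    (hg'.congr_of_eventuallyEq (primitives_eq.eventuallyEq_of_mem (isOpen_Ioo.mem_nhds hx)))

theorem integral_rpow_mul_sub_rpow {α β t : ℝ} (hα : 0 < α) (hβ : 0 < β) (ht : 0 < t) :
    ∫ s in (0:ℝ)..t, s ^ (α - 1) * (t - s) ^ (β - 1) =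
      t ^ (α + β - 1) * (Real.Gamma α * Real.Gamma β / Real.Gamma (α + β)) := by
  have integral_ofReal : ((∫ s in (0:ℝ)..t, s ^ (α - 1) * (t - s) ^ (β - 1) : ℝ) : ℂ) =
      ∫ s in (0:ℝ)..t, (s : ℂ) ^ ((α : ℂ) - 1) * ((t : ℂ) - s) ^ ((β : ℂ) - 1) := by
    rw [← intervalIntegral.integral_ofReal]
    refine intervalIntegral.integral_congr fun s hs => ?_
    rw [uIcc_of_le ht.le] at hs
    push_cast [Complex.ofReal_cpow hs.1, Complex.ofReal_cpow (sub_nonneg.2 hs.2)]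
    rfl
  rw [← Complex.ofReal_inj, integral_ofReal, Complex.betaIntegral_scaled _ _ ht,
    Complex.betaIntegral_eq_Gamma_mul_div _ _ (by simpa) (by simpa)]
  push_cast [Complex.ofReal_cpow ht.le, ← Complex.Gamma_ofReal]
  rfl

/-- The function `t ↦ exp (-t) * f t` on `(0, ∞)`, extended by zero to the line. The weight makes
the kernels of fractional integration integrable, and is compatible with convolution. -/
noncomputable def damp (f : ℝ → ℝ) : ℝ → ℝ :=
  (Ioi 0).indicator fun t => Real.exp (-t) * f t

theorem damp_congr {f g : ℝ → ℝ} (h : EqOn f g (Ioi 0)) : damp f = damp g :=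
  indicator_congr fun t ht => by rw [h ht]

theorem damp_ae_eq_damp_iff {f g : ℝ → ℝ} :
    damp f =ᵐ[volume] damp g ↔ f =ᵐ[volume.restrict (Ioi 0)] g := by
  rw [damp, damp, ← ae_eq_restrict_iff_indicator_ae_eq measurableSet_Ioi]
  simp only [EventuallyEq, mul_right_inj' (Real.exp_ne_zero _)]

theorem damp_convolution_damp (f g : ℝ → ℝ) :
    damp f ⋆[mul ℝ ℝ] damp g = damp fun t => ∫ s in (0:ℝ)..t, f s * g (t - s) := by
  rw [damp, damp, ← posConvolution_eq_convolution_indicator _ _ _ volume]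
  refine indicator_congr fun t _ => ?_
  rw [← intervalIntegral.integral_const_mul]
  congr 1 with s
  have exp_split : Real.exp (-t) = Real.exp (-s) * Real.exp (-(t - s)) := by
    rw [← Real.exp_add]; ring_nf
  rw [ContinuousLinearMap.mul_apply', exp_split]
  ring

theorem integrable_damp {f : ℝ → ℝ} (hf : IntegrableOn f (Ioi 0)) : Integrable (damp f) := by
  refine (integrable_indicator_iff measurableSet_Ioi).2 (hf.bdd_mul (c := 1) ?_ ?_)
  · exact Continuous.aestronglyMeasurable (by fun_prop)
  · filter_upwards [ae_restrict_mem measurableSet_Ioi] with t ht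
    simpa using ht.out.le

theorem integrableOn_Ioc_of_integrable_damp {f : ℝ → ℝ} (hf : Integrable (damp f)) (b : ℝ) :
    IntegrableOn f (Ioc 0 b) := by
  have exp_mul_damp : IntegrableOn (fun t => Real.exp t * damp f t) (Icc 0 b) :=
    hf.integrableOn.continuousOn_mul Real.continuous_exp.continuousOn isCompact_Icc
  refine (exp_mul_damp.mono_set Ioc_subset_Icc_self).congr_fun (fun t ht => ?_) measurableSet_Ioc
  simp only [damp, indicator_of_mem (mem_Ioi.2 ht.1), ← mul_assoc, ← Real.exp_add,
    add_neg_cancel, Real.exp_zero, one_mul]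

/-- The kernel `t ^ (α - 1) / Γ(α)` of the fractional integral of order `α`, whose values matter
only for `t > 0`. -/
noncomputable def rlKernel (α t : ℝ) : ℝ := t ^ (α - 1) / Real.Gamma α

theorem integrable_damp_rlKernel {α : ℝ} (hα : 0 < α) : Integrable (damp (rlKernel α)) := by
  refine (integrable_indicator_iff measurableSet_Ioi).2 ?_
  simpa only [IntegrableOn, rlKernel, mul_div_assoc] using
    (Real.GammaIntegral_convergent hα).div_const (Real.Gamma α)

theorem RL_zero (f : ℝ → ℝ) : RL 0 f = f := by
  ext t; simp [RL]

theorem RL_one (f : ℝ → ℝ) : RL 1 f = fun t => ∫ s in (0:ℝ)..t, f s := by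
  ext t; simp [RL]

theorem RL_eq_integral_mul_rlKernel {α : ℝ} (hα : α ≠ 0) (f : ℝ → ℝ) :
    RL α f = fun t => ∫ s in (0:ℝ)..t, f s * rlKernel α (t - s) := by
  ext t
  rw [RL, if_neg hα, ← intervalIntegral.integral_const_mul]
  congr 1 with s
  rw [rlKernel]
  ring

theorem RL_rlKernel {α β t : ℝ} (hα : 0 < α) (hβ : 0 < β) (ht : 0 < t) :
    RL β (rlKernel α) t = rlKernel (α + β) t := by
  have hΓα := (Real.Gamma_pos_of_pos hα).ne'
  have hΓβ := (Real.Gamma_pos_of_pos hβ).ne'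
  simp only [RL_eq_integral_mul_rlKernel hβ.ne', rlKernel, div_mul_div_comm,
    intervalIntegral.integral_div, integral_rpow_mul_sub_rpow hα hβ ht]
  field_simp

theorem damp_RL {α : ℝ} (hα : α ≠ 0) (f : ℝ → ℝ) :
    damp (RL α f) = damp f ⋆[mul ℝ ℝ] damp (rlKernel α) := by
  rw [damp_convolution_damp, RL_eq_integral_mul_rlKernel hα]

theorem damp_rlKernel_convolution {α β : ℝ} (hα : 0 < α) (hβ : 0 < β) :
    damp (rlKernel α) ⋆[mul ℝ ℝ] damp (rlKernel β) = damp (rlKernel (α + β)) := by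
  rw [← damp_RL hβ.ne']
  exact damp_congr fun t ht => RL_rlKernel hα hβ ht

theorem RL_congr_ae {f g : ℝ → ℝ} {b : ℝ} (α : ℝ) (h : f =ᵐ[volume.restrict (Ioc 0 b)] g) :
    RL α f =ᵐ[volume.restrict (Ioc 0 b)] RL α g := by
  rcases eq_or_ne α 0 with rfl | hα
  · simpa only [RL_zero] using h
  filter_upwards [ae_restrict_mem measurableSet_Ioc] with t ht
  have hfg : f =ᵐ[volume.restrict (Ioc 0 t)] g :=
    ae_restrict_of_ae_restrict_of_subset (Ioc_subset_Ioc_right ht.2) h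
  simp only [RL_eq_integral_mul_rlKernel hα, intervalIntegral.integral_of_le ht.1.le]
  exact integral_congr_ae (hfg.mul .rfl)

theorem integrable_damp_RL {α : ℝ} (hα : 0 < α) {f : ℝ → ℝ} (hf : Integrable (damp f)) :
    Integrable (damp (RL α f)) := by
  rw [damp_RL hα.ne']
  exact hf.integrable_convolution _ (integrable_damp_rlKernel hα)

theorem RL_RL_ae_eq_Ioi {α β : ℝ} (hα : 0 < α) (hβ : 0 < β) {f : ℝ → ℝ}
    (hf : Integrable (damp f)) :
    RL β (RL α f) =ᵐ[volume.restrict (Ioi 0)] RL (α + β) f := by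
  rw [← damp_ae_eq_damp_iff, damp_RL hβ.ne', damp_RL hα.ne', damp_RL (add_pos hα hβ).ne',
    ← damp_rlKernel_convolution hα hβ]
  exact ae_convolution_assoc _ _ _ _ mul_assoc hf (integrable_damp_rlKernel hα)
    (integrable_damp_rlKernel hβ)

section Ioc

variable {f g : ℝ → ℝ} {α β b : ℝ}

theorem integrableOn_RL (hα : 0 ≤ α) (hf : IntegrableOn f (Ioc 0 b)) :
    IntegrableOn (RL α f) (Ioc 0 b) := by
  rcases hα.eq_or_lt with rfl | hα
  · rwa [RL_zero]
  have f_eq : (Ioc 0 b).indicator f =ᵐ[volume.restrict (Ioc 0 b)] f :=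
    indicator_ae_eq_restrict measurableSet_Ioc
  have damp_int : Integrable (damp ((Ioc 0 b).indicator f)) :=
    integrable_damp (hf.integrable_indicator measurableSet_Ioc).integrableOn
  exact (integrableOn_Ioc_of_integrable_damp (integrable_damp_RL hα damp_int) b).congr
    (RL_congr_ae α f_eq)

theorem RL_RL_ae_eq (hα : 0 ≤ α) (hβ : 0 ≤ β) (hf : IntegrableOn f (Ioc 0 b)) :
    RL β (RL α f) =ᵐ[volume.restrict (Ioc 0 b)] RL (α + β) f := by
  rcases hα.eq_or_lt with rfl | hα
  · rw [RL_zero, zero_add]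
  rcases hβ.eq_or_lt with rfl | hβ
  · rw [RL_zero, add_zero]
  have f_eq : (Ioc 0 b).indicator f =ᵐ[volume.restrict (Ioc 0 b)] f :=
    indicator_ae_eq_restrict measurableSet_Ioc
  have damp_int : Integrable (damp ((Ioc 0 b).indicator f)) :=
    integrable_damp (hf.integrable_indicator measurableSet_Ioc).integrableOn
  calc RL β (RL α f)
      =ᵐ[volume.restrict (Ioc 0 b)] RL β (RL α ((Ioc 0 b).indicator f)) :=
        RL_congr_ae β (RL_congr_ae α f_eq.symm)
    _ =ᵐ[volume.restrict (Ioc 0 b)] RL (α + β) ((Ioc 0 b).indicator f) :=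
        ae_restrict_of_ae_restrict_of_subset Ioc_subset_Ioi_self
          (RL_RL_ae_eq_Ioi hα hβ damp_int)
    _ =ᵐ[volume.restrict (Ioc 0 b)] RL (α + β) f := RL_congr_ae (α + β) f_eq

theorem RL_ae_eq_of_le (hα : 0 ≤ α) (hαβ : α ≤ β) (hf : IntegrableOn f (Ioc 0 b))
    (hg : IntegrableOn g (Ioc 0 b)) (h : RL α f =ᵐ[volume.restrict (Ioc 0 b)] RL α g) :
    RL β f =ᵐ[volume.restrict (Ioc 0 b)] RL β g := by
  have RL_β_eq {u : ℝ → ℝ} (hu : IntegrableOn u (Ioc 0 b)) :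
      RL (β - α) (RL α u) =ᵐ[volume.restrict (Ioc 0 b)] RL β u := by
    simpa only [add_sub_cancel] using RL_RL_ae_eq hα (sub_nonneg.2 hαβ) hu
  exact (RL_β_eq hf).symm.trans ((RL_congr_ae (β - α) h).trans (RL_β_eq hg))

theorem ae_eq_of_RL_natCast_ae_eq (hb : 0 ≤ b) (n : ℕ) (hf : IntegrableOn f (Ioc 0 b))
    (hg : IntegrableOn g (Ioc 0 b)) (h : RL n f =ᵐ[volume.restrict (Ioc 0 b)] RL n g) :
    f =ᵐ[volume.restrict (Ioc 0 b)] g := by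
  induction n with
  | zero => simpa only [Nat.cast_zero, RL_zero] using h
  | succ n ih =>
    have hn : (0 : ℝ) ≤ n := n.cast_nonneg
    have RL_one_eq : RL 1 (RL n f) =ᵐ[volume.restrict (Ioc 0 b)] RL 1 (RL n g) := by
      rw [Nat.cast_succ] at h
      exact (RL_RL_ae_eq hn zero_le_one hf).trans (h.trans (RL_RL_ae_eq hn zero_le_one hg).symm)
    rw [RL_one, RL_one] at RL_one_eq
    exact ih (ae_eq_of_intervalIntegral_ae_eq hb (integrableOn_RL hn hf) (integrableOn_RL hn hg)
      RL_one_eq)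

end Ioc

/-- For `α > 0`, the Riemann–Liouville fractional integral `I^α` is injective on `L¹[0,b]`. -/
theorem RL_injective (b : ℝ) (hb : 0 < b) (α : ℝ) (hα : 0 < α) (f g : ℝ → ℝ)
    (hf : IntegrableOn f (Set.Icc 0 b) volume) (hg : IntegrableOn g (Set.Icc 0 b) volume)
    (h : RL α f =ᵐ[volume.restrict (Set.Icc 0 b)] RL α g) :
    f =ᵐ[volume.restrict (Set.Icc 0 b)] g := by
  rw [integrableOn_Icc_iff_integrableOn_Ioc] at hf hg
  rw [← restrict_Ioc_eq_restrict_Icc] at h ⊢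
  obtain ⟨n, hαn⟩ := exists_nat_ge α
  exact ae_eq_of_RL_natCast_ae_eq hb.le n hf hg (RL_ae_eq_of_le hα.le hαn hf hg h)
end
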